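/- arXiv:2009.06224 — 2 statements merged into one kernel-verified Lean document; each statement's English description precedes it below -/
import Mathlib

section
/- A Cournot game satisfying assumptions (A1) and (A2) has exactly one Nash equilibrium. -/
lemma convex_tangent {s : Set ℝ} {f : ℝ → ℝ} {d x y : ℝ} (hf : ConvexOn ℝ s f)
    (hd : HasDerivWithinAt f d s x) (hx : x ∈ s) (hy : y ∈ s) :
    f x + d * (y - x) ≤ f y := by
  rcases lt_trichotomy x y with h | h | h
  · have := hf.le_slope_of_hasDerivWithinAt hx hy h hd
    rw [slope_def_field, le_div_iff₀ (by linarith)] at this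
    linarith
  · subst h; simp
  · have := hf.slope_le_of_hasDerivWithinAt hy hx h hd
    rw [slope_def_field, div_le_iff₀ (by linarith)] at this
    linarith

lemma concave_tangent {s : Set ℝ} {f : ℝ → ℝ} {d x y : ℝ} (hf : ConcaveOn ℝ s f)
    (hd : HasDerivWithinAt f d s x) (hx : x ∈ s) (hy : y ∈ s) :
    f y ≤ f x + d * (y - x) := by
  have := convex_tangent hf.neg hd.neg hx hy
  simp only [Pi.neg_apply] at this
  linarith

/-- First-order condition at a maximum over an interval. -/
lemma foc_Icc {f : ℝ → ℝ} {d x b : ℝ} (hx : 0 ≤ x) (hb : x < b)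
    (hd : HasDerivWithinAt f d (Set.Icc 0 b) x)
    (hmax : ∀ z ∈ Set.Icc 0 b, f z ≤ f x) : d ≤ 0 ∧ (0 < x → d = 0) := by
  have hm : IsLocalMaxOn f (Set.Icc 0 b) x :=
    IsMaxOn.localize (fun z hz => hmax z hz)
  have key : ∀ z ∈ Set.Icc 0 b, (z - x) * d ≤ 0 := by
    intro z hz
    have h := hm.hasFDerivWithinAt_nonpos hd.hasFDerivWithinAt
      (sub_mem_posTangentConeAt_of_segment_subset
        ((convex_Icc 0 b).segment_subset ⟨hx, hb.le⟩ hz))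
    simpa using h
  have h1 := key b ⟨by linarith, le_rfl⟩
  have h2 := key 0 ⟨le_rfl, by linarith⟩
  have h3 : d ≤ 0 := by
    by_contra hc
    push Not at hc
    nlinarith [mul_pos (sub_pos.2 hb) hc]
  refine ⟨h3, fun h => le_antisymm h3 ?_⟩
  by_contra hc
  push Not at hc
  nlinarith [mul_pos h (neg_pos.2 hc)]


/- STATEMENT 0: A Cournot game satisfying assumptions (A1) and (A2) has exactly
one Nash equilibrium.

Player `i` chooses a production level `x i ≥ 0` and receives utility
`π_i(x) = p (∑ j, x j) * x i - C i (x i)`. -/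
theorem cournot_game_unique_nash_equilibrium
    (N : ℕ) (hN : 0 < N)
    (p p' p'' : ℝ → ℝ) (ymax : ℝ) (hymax : 0 < ymax)
    -- (A1): price function
    (hp_concave : ConcaveOn ℝ (Set.Icc 0 ymax) p)
    (hp_anti : StrictAntiOn p (Set.Icc 0 ymax))
    (hp_deriv : ∀ y ∈ Set.Icc (0:ℝ) ymax, HasDerivWithinAt p (p' y) (Set.Icc 0 ymax) y)
    (hp_deriv2 : ∀ y ∈ Set.Icc (0:ℝ) ymax, HasDerivWithinAt p' (p'' y) (Set.Icc 0 ymax) y)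
    (hp_ymax : p ymax = 0)
    (hp_pos_before : ∀ y ∈ Set.Ico (0:ℝ) ymax, 0 < p y)  -- ymax is the *first* zero of p
    (hp_after : ∀ y, ymax < y → p y = 0)
    (hp0 : 0 < p 0)
    -- (A2): cost functions
    (C C' C'' : Fin N → ℝ → ℝ)
    (hC_convex : ∀ i, ConvexOn ℝ (Set.Ici 0) (C i))
    (hC_mono : ∀ i, StrictMonoOn (C i) (Set.Ici 0))
    (hC_deriv : ∀ i, ∀ x : ℝ, 0 ≤ x → HasDerivWithinAt (C i) (C' i x) (Set.Ici 0) x)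
    (hC_deriv2 : ∀ i, ∀ x : ℝ, 0 ≤ x → HasDerivWithinAt (C' i) (C'' i x) (Set.Ici 0) x)
    (hC'0 : ∀ i, C' i 0 < p 0) :
    -- there is exactly one Nash equilibrium
    ∃! xstar : Fin N → ℝ,
      (∀ i, 0 ≤ xstar i) ∧
      ∀ i : Fin N, ∀ xi : ℝ, 0 ≤ xi →
        p (∑ j, Function.update xstar i xi j) * xi - C i xi ≤
          p (∑ j, xstar j) * xstar i - C i (xstar i) := by
  have hp_tan : ∀ y ∈ Set.Icc (0:ℝ) ymax, ∀ z ∈ Set.Icc (0:ℝ) ymax,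
      p z ≤ p y + p' y * (z - y) :=
    fun y hy z hz => concave_tangent hp_concave (hp_deriv y hy) hy hz
  have hC_tan : ∀ i, ∀ x : ℝ, 0 ≤ x → ∀ z : ℝ, 0 ≤ z →
      C i x + C' i x * (z - x) ≤ C i z :=
    fun i x hx z hz => convex_tangent (hC_convex i) (hC_deriv i x hx) hx hz
  have hp'_neg : ∀ y, 0 < y → y ≤ ymax → p' y < 0 := by
    intro y h0 h1
    have h2 := hp_tan y ⟨h0.le, h1⟩ 0 ⟨le_rfl, hymax.le⟩
    have h3 := hp_anti ⟨le_rfl, hymax.le⟩ ⟨h0.le, h1⟩ h0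
    by_contra hc
    push Not at hc
    nlinarith [mul_nonneg hc h0.le]
  have hp'_anti : ∀ y ∈ Set.Icc (0:ℝ) ymax, ∀ z ∈ Set.Icc (0:ℝ) ymax, y ≤ z → p' z ≤ p' y := by
    intro y hy z hz hyz
    rcases hyz.eq_or_lt with h | h
    · rw [h]
    have h1 := hp_tan y hy z hz
    have h2 := hp_tan z hz y hy
    by_contra hc
    push Not at hc
    nlinarith [mul_pos (sub_pos.2 hc) (sub_pos.2 h)]
  have hC'_mono : ∀ i, ∀ x : ℝ, 0 ≤ x → ∀ z : ℝ, x ≤ z → C' i x ≤ C' i z := by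
    intro i x hx z hxz
    rcases hxz.eq_or_lt with h | h
    · rw [h]
    have h1 := hC_tan i x hx z (hx.trans hxz)
    have h2 := hC_tan i z (hx.trans hxz) x hx
    by_contra hc
    push Not at hc
    nlinarith [mul_pos (sub_pos.2 hc) (sub_pos.2 h)]
  have hC'_pos : ∀ i, ∀ x : ℝ, 0 < x → 0 < C' i x := by
    intro i x hx
    have h1 := hC_tan i x hx.le 0 le_rfl
    have h2 := hC_mono i (Set.mem_Ici.2 le_rfl) (Set.mem_Ici.2 hx.le) hx
    by_contra hc
    push Not at hc
    nlinarith [mul_nonneg (neg_nonneg.2 hc) hx.le]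
  have hp_cont : ContinuousOn p (Set.Icc 0 ymax) := fun y hy => (hp_deriv y hy).continuousWithinAt
  have hp'_cont : ContinuousOn p' (Set.Icc 0 ymax) :=
    fun y hy => (hp_deriv2 y hy).continuousWithinAt
  have hC'_cont : ∀ i, ContinuousOn (C' i) (Set.Ici 0) :=
    fun i x hx => (hC_deriv2 i x hx).continuousWithinAt
  have hp_nonneg : ∀ y ∈ Set.Icc (0:ℝ) ymax, 0 ≤ p y := by
    intro y hy
    rcases hy.2.eq_or_lt with h | h
    · rw [h, hp_ymax]
    · exact (hp_pos_before y ⟨hy.1, h⟩).le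
  have hupd : ∀ (x : Fin N → ℝ) (i : Fin N) (z : ℝ),
      ∑ j, Function.update x i z j = (∑ j, x j) - x i + z := by
    intro x i z
    rw [Finset.sum_update_of_mem (Finset.mem_univ i),
      ← Finset.add_sum_erase Finset.univ x (Finset.mem_univ i), Finset.sdiff_singleton_eq_erase]
    ring
  -- the marginal profit
  set g : Fin N → ℝ → ℝ → ℝ := fun i S x => p S + p' S * x - C' i x with hg
  have hg_anti : ∀ i S, 0 < S → S ≤ ymax → ∀ x z, 0 ≤ x → x < z → g i S z < g i S x := by
    intro i S h0 h1 x z hx hz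
    have h2 := hp'_neg S h0 h1
    have h3 := hC'_mono i x hx z hz.le
    simp only [hg]
    nlinarith [mul_pos (neg_pos.2 h2) (sub_pos.2 hz)]
  -- best responses given the total
  have hex : ∀ i S, ∃ x : ℝ, 0 < S → S ≤ ymax → 0 ≤ x ∧ g i S x ≤ 0 ∧ (0 < x → g i S x = 0) := by
    intro i S
    by_cases hS : 0 < S ∧ S ≤ ymax
    swap
    · exact ⟨0, fun h1 h2 => absurd ⟨h1, h2⟩ hS⟩
    obtain ⟨h0, h1⟩ := hS
    by_cases hz : g i S 0 ≤ 0
    · exact ⟨0, fun _ _ => ⟨le_rfl, hz, fun h => absurd h (lt_irrefl _)⟩⟩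
    push Not at hz
    have hn := hp'_neg S h0 h1
    have hz' : 0 < p S - C' i 0 := by simpa [hg] using hz
    set X := (p S - C' i 0) / (- p' S) with hX
    have hXp : 0 < X := div_pos hz' (neg_pos.2 hn)
    have hXe : X * (- p' S) = p S - C' i 0 := div_mul_cancel₀ _ (neg_pos.2 hn).ne'
    have hgX : g i S X ≤ 0 := by
      have := hC'_mono i 0 le_rfl X hXp.le
      simp only [hg]; nlinarith
    have hc : ContinuousOn (g i S) (Set.Icc 0 X) := by
      have := (hC'_cont i).mono (Set.Icc_subset_Ici_self : Set.Icc 0 X ⊆ Set.Ici 0)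
      simp only [hg]
      fun_prop
    obtain ⟨x, hx, hxe⟩ := intermediate_value_Icc' hXp.le hc ⟨hgX, hz.le⟩
    exact ⟨x, fun _ _ => ⟨hx.1, hxe.le, fun _ => hxe⟩⟩
  choose r hr using hex
  have hr_lt : ∀ i S, 0 < S → S ≤ ymax → ∀ x, 0 ≤ x → 0 < g i S x → x < r i S := by
    intro i S h0 h1 x hx hgx
    obtain ⟨a1, a2, a3⟩ := hr i S h0 h1
    by_contra hc
    push Not at hc
    rcases hc.eq_or_lt with h | h
    · rw [← h] at hgx; linarith
    · have := hg_anti i S h0 h1 _ _ a1 h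
      linarith
  have hr_gt : ∀ i S, 0 < S → S ≤ ymax → ∀ x, 0 ≤ x → g i S x < 0 → r i S ≤ x := by
    intro i S h0 h1 x hx hgx
    obtain ⟨a1, a2, a3⟩ := hr i S h0 h1
    by_contra hc
    push Not at hc
    have := hg_anti i S h0 h1 _ _ hx hc
    have := a3 (by linarith)
    linarith
  have hr_cont : ∀ i, ContinuousOn (r i) (Set.Ioc 0 ymax) := by
    intro i S hS
    obtain ⟨a1, a2, a3⟩ := hr i S hS.1 hS.2
    have hgc : ∀ x, ContinuousWithinAt (fun S => g i S x) (Set.Ioc 0 ymax) S := by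
      intro x
      have e1 : ContinuousWithinAt p (Set.Ioc 0 ymax) S :=
        (hp_cont.mono Set.Ioc_subset_Icc_self) S hS
      have e2 : ContinuousWithinAt p' (Set.Ioc 0 ymax) S :=
        (hp'_cont.mono Set.Ioc_subset_Icc_self) S hS
      simp only [hg]
      exact (e1.add (e2.mul continuousWithinAt_const)).sub continuousWithinAt_const
    refine tendsto_order.2 ⟨fun a ha => ?_, fun a ha => ?_⟩
    · by_cases h : 0 ≤ a
      · have h1 : 0 < g i S a := by
          have := hg_anti i S hS.1 hS.2 _ _ h ha
          have := a3 (by linarith)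
          linarith
        filter_upwards [(hgc a).eventually (lt_mem_nhds h1), self_mem_nhdsWithin] with T hT hT2
        exact hr_lt i T hT2.1 hT2.2 a h hT
      · filter_upwards [self_mem_nhdsWithin] with T hT2
        have := (hr i T hT2.1 hT2.2).1
        push Not at h
        linarith
    · obtain ⟨b, hb1, hb2⟩ := exists_between ha
      have h1 : g i S b < 0 := by
        have := hg_anti i S hS.1 hS.2 _ _ a1 hb1
        linarith
      filter_upwards [(hgc b).eventually (gt_mem_nhds h1), self_mem_nhdsWithin] with T hT hT2
      exact (hr_gt i T hT2.1 hT2.2 b (a1.trans hb1.le) hT).trans_lt hb2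
  -- existence of the total
  have htotal : ∃ S, 0 < S ∧ S < ymax ∧ ∑ i, r i S = S := by
    have hr0 : ∀ i, r i ymax = 0 := by
      intro i
      obtain ⟨a1, a2, a3⟩ := hr i ymax hymax le_rfl
      by_contra hc
      have hpos : 0 < r i ymax := lt_of_le_of_ne a1 (Ne.symm hc)
      have h1 := a3 hpos
      have h2 := hC'_pos i _ hpos
      have h3 := hp'_neg ymax hymax le_rfl
      simp only [hg, hp_ymax] at h1
      nlinarith
    let i0 : Fin N := ⟨0, hN⟩
    obtain ⟨a, ha0, ha1, ha2⟩ : ∃ a, 0 < a ∧ a ≤ ymax ∧ 0 < g i0 a a := by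
      have hc : ContinuousOn (fun S => g i0 S S) (Set.Icc 0 ymax) := by
        have := (hC'_cont i0).mono (Set.Icc_subset_Ici_self : Set.Icc 0 ymax ⊆ Set.Ici 0)
        simp only [hg]
        fun_prop
      have hc0 := (hc 0 ⟨le_rfl, hymax.le⟩).mono
        (Set.Ioc_subset_Icc_self : Set.Ioc 0 ymax ⊆ Set.Icc 0 ymax)
      have hg0 : 0 < g i0 0 0 := by
        have := hC'0 i0
        simp only [hg]; linarith
      have hev := hc0.eventually (lt_mem_nhds hg0)
      rw [nhdsWithin_Ioc_eq_nhdsGT hymax] at hev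
      obtain ⟨a, h1, h2⟩ := (hev.and (Ioc_mem_nhdsGT hymax)).exists
      exact ⟨a, h2.1, h2.2, h1⟩
    have hra := hr_lt i0 a ha0 ha1 a ha0.le ha2
    have hsum : r i0 a ≤ ∑ i, r i a :=
      Finset.single_le_sum (f := fun i => r i a) (fun i _ => (hr i a ha0 ha1).1)
        (Finset.mem_univ i0)
    have hc : ContinuousOn (fun S => ∑ i, r i S - S) (Set.Icc a ymax) := by
      refine ContinuousOn.sub (continuousOn_finsetSum _ fun i _ => (hr_cont i).mono ?_)
        continuousOn_id
      exact fun z hz => ⟨ha0.trans_le hz.1, hz.2⟩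
    obtain ⟨S, hS, hSe⟩ := intermediate_value_Icc' ha1 hc
      (show (0:ℝ) ∈ _ from ⟨by simp [hr0, hymax.le], by linarith⟩)
    simp only at hSe
    refine ⟨S, ha0.trans_le hS.1, lt_of_le_of_ne hS.2 ?_, by linarith⟩
    rintro rfl
    simp [hr0] at hSe
    linarith
  -- necessary conditions for an equilibrium
  have hnec : ∀ x : Fin N → ℝ, ((∀ i, 0 ≤ x i) ∧
      ∀ i : Fin N, ∀ xi : ℝ, 0 ≤ xi →
        p (∑ j, Function.update x i xi j) * xi - C i xi ≤
          p (∑ j, x j) * x i - C i (x i)) →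
      0 < ∑ j, x j ∧ ∑ j, x j < ymax ∧
      ∀ i, g i (∑ j, x j) (x i) ≤ 0 ∧ (0 < x i → g i (∑ j, x j) (x i) = 0) := by
    rintro x ⟨hx0, hx⟩
    simp only [hupd] at hx
    set S := ∑ j, x j with hS
    have hS0 : 0 ≤ S := Finset.sum_nonneg fun i _ => hx0 i
    have hSm : S < ymax := by
      by_contra hc
      push Not at hc
      have hpS : p S = 0 := by
        rcases hc.eq_or_lt with h | h
        · rw [← h, hp_ymax]
        · exact hp_after S h
      have hz : ∀ i, x i = 0 := by
        intro i
        by_contra hne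
        have hpos : 0 < x i := lt_of_le_of_ne (hx0 i) (Ne.symm hne)
        have h1 := hx i 0 le_rfl
        have h2 := hC_mono i (Set.mem_Ici.2 le_rfl) (Set.mem_Ici.2 hpos.le) hpos
        rw [hpS] at h1
        linarith
      have : S = 0 := by simp [hS, hz]
      linarith
    have hfoc : ∀ i, g i S (x i) ≤ 0 ∧ (0 < x i → g i S (x i) = 0) := by
      intro i
      have hle : x i ≤ S := Finset.single_le_sum (fun i _ => hx0 i) (Finset.mem_univ i)
      have hd : HasDerivWithinAt (fun z => p (S - x i + z) * z - C i z) (g i S (x i))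
          (Set.Icc 0 (x i + (ymax - S))) (x i) := by
        have e0 : S - x i + x i = S := by ring
        have e1 : HasDerivWithinAt (fun z => S - x i + z) 1
            (Set.Icc 0 (x i + (ymax - S))) (x i) := by
          simpa using (hasDerivWithinAt_id (x i) _).const_add (S - x i)
        have e2 : HasDerivWithinAt p (p' S) (Set.Icc 0 ymax) (S - x i + x i) := by
          rw [e0]; exact hp_deriv S ⟨hS0, hSm.le⟩
        have e3 := e2.comp (x i) e1 (fun z hz => ⟨by linarith [hz.1], by linarith [hz.2]⟩)
        have e4 := (e3.mul (hasDerivWithinAt_id (x i) _)).sub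
          ((hC_deriv i (x i) (hx0 i)).mono Set.Icc_subset_Ici_self)
        refine HasDerivWithinAt.congr_deriv e4 ?_
        change p' S * 1 * x i + p (S - x i + x i) * 1 - C' i (x i) = p S + p' S * x i - C' i (x i)
        rw [e0]
        ring
      refine foc_Icc (hx0 i) (by linarith) hd ?_
      intro z hz
      have := hx i z hz.1
      have e0 : S - x i + x i = S := by ring
      simp only [e0]
      exact this
    refine ⟨lt_of_le_of_ne hS0 ?_, hSm, hfoc⟩
    intro h0
    let i0 : Fin N := ⟨0, hN⟩
    have hxi : x i0 = 0 := by
      have hle : x i0 ≤ S := Finset.single_le_sum (fun i _ => hx0 i) (Finset.mem_univ i0)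
      exact le_antisymm (by linarith) (hx0 i0)
    have h1 := (hfoc i0).1
    have h2 := hC'0 i0
    rw [hxi, ← h0] at h1
    simp only [hg] at h1
    linarith
  -- comparison of two equilibria
  have hcmp : ∀ (x y : Fin N → ℝ), (∀ i, 0 ≤ x i) → (∀ i, 0 ≤ y i) → 0 < ∑ j, x j →
      ∑ j, x j ≤ ∑ j, y j → ∑ j, y j < ymax →
      (∀ i, g i (∑ j, x j) (x i) ≤ 0) → (∀ i, 0 < y i → g i (∑ j, y j) (y i) = 0) → x = y := by
    intro x y hx hy h0 hle hm hgx hgy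
    have hyx : ∀ i, y i ≤ x i := by
      intro i
      by_contra hc
      push Not at hc
      have h1 := hgx i
      have h2 := hgy i (lt_of_le_of_lt (hx i) hc)
      have h3 := hg_anti i (∑ j, y j) (by linarith) hm.le _ _ (hx i) hc
      have h4 := hp'_anti (∑ j, x j) ⟨h0.le, by linarith⟩ (∑ j, y j) ⟨by linarith, hm.le⟩ hle
      have h5 := hp_anti.antitoneOn (a := ∑ j, x j) (b := ∑ j, y j)
        ⟨h0.le, by linarith⟩ ⟨by linarith, hm.le⟩ hle
      have h6 := mul_le_mul_of_nonneg_right h4 (hx i)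
      simp only [hg] at h1 h2 h3
      linarith
    have hs := Finset.sum_le_sum (fun i (_ : i ∈ Finset.univ) => hyx i)
    have he := (Finset.sum_eq_sum_iff_of_le (fun i (_ : i ∈ Finset.univ) => hyx i)).1
      (le_antisymm hs hle)
    funext i
    exact (he i (Finset.mem_univ i)).symm
  obtain ⟨S, hS0, hSm, hSe⟩ := htotal
  refine ⟨fun i => r i S, ⟨fun i => (hr i S hS0 hSm.le).1, ?_⟩, ?_⟩
  · intro i
    simp only [hupd, hSe]
    obtain ⟨a1, a2, a3⟩ := hr i S hS0 hSm.le
    have hle : r i S ≤ S := by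
      conv_rhs => rw [← hSe]
      exact Finset.single_le_sum (f := fun i => r i S) (fun i _ => (hr i S hS0 hSm.le).1)
        (Finset.mem_univ i)
    set x := r i S with hx
    have main : ∀ z, 0 ≤ z → S - x + z ≤ ymax →
        p (S - x + z) * z - C i z ≤ p S * x - C i x := by
      intro z hz hzm
      have h1 := hp_tan S ⟨hS0.le, hSm.le⟩ (S - x + z) ⟨by linarith, hzm⟩
      have h2 := hC_tan i x a1 z hz
      have h3 := mul_le_mul_of_nonneg_right h1 hz
      have h4 : g i S x * (z - x) ≤ 0 := by
        rcases a1.eq_or_lt with h | h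
        · rw [← h] at a2 ⊢
          nlinarith
        · rw [a3 h]; simp
      have h5 : p' S * (z - x) ^ 2 ≤ 0 :=
        mul_nonpos_of_nonpos_of_nonneg (hp'_neg S hS0 hSm.le).le (sq_nonneg _)
      simp only [hg] at h4
      nlinarith
    intro z hz
    by_cases hzm : S - x + z ≤ ymax
    · exact main z hz hzm
    · push Not at hzm
      rw [hp_after _ hzm]
      have h1 := main 0 le_rfl (by linarith)
      have h2 := (hC_mono i).monotoneOn (Set.mem_Ici.2 le_rfl) (Set.mem_Ici.2 hz) hz
      linarith
  · intro y hy
    obtain ⟨b1, b2, b3⟩ := hnec y hy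
    have hx0 : ∀ i, 0 ≤ r i S := fun i => (hr i S hS0 hSm.le).1
    rcases le_total S (∑ j, y j) with h | h
    · refine (hcmp (fun i => r i S) y hx0 hy.1 ?_ ?_ b2 ?_ fun i => (b3 i).2).symm
      · simpa only [hSe] using hS0
      · simpa only [hSe] using h
      · simpa only [hSe] using fun i => (hr i S hS0 hSm.le).2.1
    · refine hcmp y (fun i => r i S) hy.1 hx0 b1 ?_ ?_ (fun i => (b3 i).1) ?_
      · simpa only [hSe] using h
      · simpa only [hSe] using hSm
      · simpa only [hSe] using fun i => (hr i S hS0 hSm.le).2.2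
end

section
/- Let h : [0, b] → ℝ be continuous and strictly decreasing with h(0) > 0 and ∫_0^b h(x) dx = 0, and let w : [0, b] → ℝ be positive and strictly increasing. Then ∫_0^b h(x)·w(x) dx < 0. -/
/- STATEMENT 6: Let h : [0, b] → ℝ be continuous and strictly decreasing with
h(0) > 0 and ∫_0^b h = 0, and let w : [0, b] → ℝ be positive and strictly
increasing. Then ∫_0^b h(x)·w(x) dx < 0. -/
theorem integral_mul_increasing_weight_neg
    (b : ℝ) (hb : 0 < b) (h w : ℝ → ℝ)
    (hh_cont : ContinuousOn h (Set.Icc 0 b))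
    (hh_anti : StrictAntiOn h (Set.Icc 0 b))
    (hh0 : 0 < h 0)
    (hh_int : ∫ x in (0:ℝ)..b, h x = 0)
    (hw_pos : ∀ x ∈ Set.Icc (0:ℝ) b, 0 < w x)
    (hw_mono : StrictMonoOn w (Set.Icc 0 b)) :
    ∫ x in (0:ℝ)..b, h x * w x < 0 := by
  have hhi : IntervalIntegrable h MeasureTheory.volume 0 b :=
    ContinuousOn.intervalIntegrable (by rwa [Set.uIcc_of_le hb.le])
  have h0m : (0:ℝ) ∈ Set.Icc 0 b := ⟨le_rfl, hb.le⟩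
  have hbm : b ∈ Set.Icc 0 b := ⟨hb.le, le_rfl⟩
  have hwi : IntervalIntegrable w MeasureTheory.volume 0 b :=
    MonotoneOn.intervalIntegrable (by rw [Set.uIcc_of_le hb.le]; exact hw_mono.monotoneOn)
  have hhb : h b < 0 := by
    by_contra! hcon
    have := intervalIntegral.intervalIntegral_pos_of_pos_on hhi
      (fun x hx => lt_of_le_of_lt hcon (hh_anti ⟨hx.1.le, hx.2.le⟩ hbm hx.2)) hb
    linarith
  obtain ⟨c, hc, hc0⟩ := intermediate_value_Icc' hb.le hh_cont ⟨hhb.le, hh0.le⟩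
  have hc1 : 0 < c := lt_of_le_of_ne hc.1 (by rintro rfl; linarith)
  have hc2 : c < b := lt_of_le_of_ne hc.2 (by rintro rfl; linarith)
  have hhw : IntervalIntegrable (fun x => h x * w x) MeasureTheory.volume 0 b :=
    hwi.continuousOn_mul (by rwa [Set.uIcc_of_le hb.le])
  have hhc : IntervalIntegrable (fun x => h x * w c) MeasureTheory.volume 0 b :=
    hhi.mul_const _
  have hgi := hhc.sub hhw
  have hg1 : IntervalIntegrable (fun x => h x * w c - h x * w x) MeasureTheory.volume 0 c :=
    hgi.mono_set (by
      rw [Set.uIcc_of_le hb.le, Set.uIcc_of_le hc.1]; exact Set.Icc_subset_Icc le_rfl hc.2)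
  have hg2 : IntervalIntegrable (fun x => h x * w c - h x * w x) MeasureTheory.volume c b :=
    hgi.mono_set (by
      rw [Set.uIcc_of_le hb.le, Set.uIcc_of_le hc.2]; exact Set.Icc_subset_Icc hc.1 le_rfl)
  have p1 := intervalIntegral.intervalIntegral_pos_of_pos_on hg1 (fun x hx => by
    have hxm : x ∈ Set.Icc 0 b := ⟨hx.1.le, hx.2.le.trans hc.2⟩
    have a1 := hh_anti hxm hc hx.2
    have a2 := hw_mono hxm hc hx.2
    rw [hc0] at a1
    nlinarith [mul_pos a1 (sub_pos.2 a2)]) hc1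
  have p2 := intervalIntegral.intervalIntegral_pos_of_pos_on hg2 (fun x hx => by
    have hxm : x ∈ Set.Icc 0 b := ⟨hc.1.trans hx.1.le, hx.2.le⟩
    have a1 := hh_anti hc hxm hx.1
    have a2 := hw_mono hc hxm hx.1
    rw [hc0] at a1
    nlinarith [mul_pos (neg_pos.2 a1) (sub_pos.2 a2)]) hc2
  have e1 := intervalIntegral.integral_add_adjacent_intervals hg1 hg2
  rw [intervalIntegral.integral_sub hhc hhw, intervalIntegral.integral_mul_const, hh_int] at e1
  linarith
end
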